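/- Let G be a strongly connected row-finite countable directed graph with infinitely many vertices such that the set of exits of G (tail-equivalence classes of exit paths) is at most countable. Then G contains a bare exit path. -/

import Mathlib

open scoped ENNReal NNReal Classical
open Filter MeasureTheory

/-- A countable directed graph: countable sets of vertices and edges with
source and range maps. -/
structure DirGraph where
  V : Type
  E : Type
  countV : Countable V
  countE : Countable E
  s : E → V
  r : E → V

namespace DirGraph

attribute [instance] countV countE

variable (G : DirGraph)

/-- `μ` is a finite path (a vertex counts as the empty path). -/
def IsPath (μ : List G.E) : Prop := μ.Chain' (fun e f => G.r e = G.s f)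

/-- `μ` is a finite path from `u` to `w`. -/
def IsPathFrom (μ : List G.E) (u w : G.V) : Prop :=
  G.IsPath μ ∧ (∀ e ∈ μ.head?, G.s e = u) ∧ (∀ e ∈ μ.getLast?, G.r e = w) ∧ (μ = [] → u = w)

/-- A function `F : E → ℝ` extended to finite paths. -/
def Fsum (F : G.E → ℝ) (μ : List G.E) : ℝ := (μ.map F).sum

/-- The matrix `A(β)` over the vertices, with entries in `[0,∞]`:
`A(β)_{uw} = Σ_{e : u → w} e^{-β F(e)}`. -/
noncomputable def Amat (F : G.E → ℝ) (β : ℝ) (u w : G.V) : ℝ≥0∞ :=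
  ∑' e : {e : G.E // G.s e = u ∧ G.r e = w}, ENNReal.ofReal (Real.exp (-β * F e.1))

/-- The powers of the matrix `A(β)`, defined recursively; `A(β)⁰` is the identity matrix. -/
noncomputable def Apow (F : G.E → ℝ) (β : ℝ) : ℕ → G.V → G.V → ℝ≥0∞
  | 0, u, w => if u = w then 1 else 0
  | n + 1, u, w => ∑' x : G.V, G.Amat F β u x * Apow F β n x w

/-- A sink is a vertex emitting no edges. -/
def IsSink (v : G.V) : Prop := ∀ e : G.E, G.s e ≠ v

/-- An infinite emitter is a vertex emitting infinitely many edges. -/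
def InfEmitter (v : G.V) : Prop := {e : G.E | G.s e = v}.Infinite

/-- A set of vertices is hereditary when it is closed under following edges. -/
def Hereditary (H : Set G.V) : Prop := ∀ e : G.E, G.s e ∈ H → G.r e ∈ H

/-- A set of vertices `H` is saturated when every vertex of `V ∖ V∞` all of whose
successors lie in `H` belongs to `H`. -/
def Saturated (H : Set G.V) : Prop :=
  ∀ v : G.V, ¬ G.IsSink v → ¬ G.InfEmitter v → (∀ e : G.E, G.s e = v → G.r e ∈ H) → v ∈ H

/-- `G` is cofinal when the only nonempty hereditary and saturated set of
vertices is the whole vertex set. -/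
def Cofinal : Prop :=
  ∀ H : Set G.V, H.Nonempty → G.Hereditary H → G.Saturated H → H = Set.univ

/-- The set of non-wandering vertices: those lying on a loop of length ≥ 1. -/
def NW : Set G.V := {v | ∃ μ : List G.E, μ ≠ [] ∧ G.IsPathFrom μ v v}

/-- `G` is strongly connected when there is a finite path between any two vertices. -/
def StronglyConnected : Prop := ∀ u w : G.V, ∃ μ : List G.E, G.IsPathFrom μ u w

/-- `G` is row-finite when every vertex emits only finitely many edges. -/
def RowFinite : Prop := ∀ v : G.V, {e : G.E | G.s e = v}.Finite

/-- `ψ` is an `A(β)`-harmonic vector. -/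
def Harmonic (F : G.E → ℝ) (β : ℝ) (ψ : G.V → ℝ≥0) : Prop :=
  ∀ v : G.V, ∑' w : G.V, G.Amat F β v w * ψ w = (ψ v : ℝ≥0∞)

/-- `A(β)` is transient when `Σ_n A(β)ⁿ_{vv} < ∞` for every vertex. -/
def Transient (F : G.E → ℝ) (β : ℝ) : Prop :=
  ∀ v : G.V, ∑' n : ℕ, G.Apow F β n v v ≠ ⊤

/-- `A(β)` is recurrent when `Σ_n A(β)ⁿ_{vv} = ∞` for some vertex. -/
def Recurrent (F : G.E → ℝ) (β : ℝ) : Prop :=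
  ∃ v : G.V, ∑' n : ℕ, G.Apow F β n v v = ⊤

/-- An exit path: a sequence of vertices joined by edges which leaves every
finite set of vertices. -/
def IsExitPath (t : ℕ → G.V) : Prop :=
  (∀ i : ℕ, ∃ e : G.E, G.s e = t i ∧ G.r e = t (i + 1)) ∧
  ∀ M : Set G.V, M.Finite → ∃ N : ℕ, ∀ i : ℕ, N ≤ i → t i ∉ M

/-- Tail equivalence of vertex sequences. -/
def TailEquiv (t t' : ℕ → G.V) : Prop :=
  ∃ k : ℤ, ∃ N : ℕ, ∀ i : ℕ, N ≤ i → 0 ≤ (i : ℤ) + k ∧ t ((i : ℤ) + k).toNat = t' i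

/-- A simple loop based at `v`: a loop which returns to `v` only at the very end. -/
def IsSimpleLoop (v : G.V) (μ : List G.E) : Prop :=
  μ ≠ [] ∧ G.IsPathFrom μ v v ∧
  ∀ (i : ℕ) (h : i + 1 < μ.length), G.r (μ.get ⟨i, Nat.lt_of_succ_lt h⟩) ≠ v

/-- `lⁿ_{vv}(β)`: the weighted number of simple loops of length `n` based at `v`. -/
noncomputable def loopSum (F : G.E → ℝ) (β : ℝ) (v : G.V) (n : ℕ) : ℝ≥0∞ :=
  ∑' μ : {μ : List G.E // μ.length = n ∧ G.IsSimpleLoop v μ},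
    ENNReal.ofReal (Real.exp (-β * G.Fsum F μ.1))

/-- The space `P(G)` of infinite paths in `G`. -/
def PathSpace : Type := {p : ℕ → G.E // ∀ i : ℕ, G.r (p i) = G.s (p (i + 1))}

/-- The Borel σ-algebra of `P(G)` as a subspace of the product `E^ℕ` with `E`
discrete (for a countable discrete space, the Borel σ-algebra is the power set). -/
instance : MeasurableSpace G.PathSpace :=
  letI : MeasurableSpace G.E := ⊤
  inferInstanceAs (MeasurableSpace {p : ℕ → G.E // ∀ i : ℕ, G.r (p i) = G.s (p (i + 1))})

/-- The cylinder set `Z'(v)` of infinite paths starting at the vertex `v`. -/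
def cylV (v : G.V) : Set G.PathSpace := {p | G.s (p.1 0) = v}

/-- The cylinder set `Z'(μ)` of infinite paths beginning with the finite path `μ`. -/
def cylP (μ : List G.E) : Set G.PathSpace :=
  {p | ∀ (i : ℕ) (h : i < μ.length), p.1 i = μ.get ⟨i, h⟩}

/-- The set `P(G)_wan` of wandering infinite paths: those visiting each vertex
only finitely many times. -/
def wanSet : Set G.PathSpace := {p | ∀ v : G.V, {i : ℕ | G.s (p.1 i) = v}.Finite}

end DirGraph

/-!
Suppose no exit path is bare. Every geodesic ray `t` from the roots is then entered infinitely often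
by an edge that is not its own, and the geodesics leading to these side entries accumulate at a
geodesic ray `t'` from which one can return to side entries of `t` arbitrarily far out, without
coming back near the roots. This relation is transitive with closed fibres on the compact space of
geodesic rays, so some ray `t` is related to itself. Such a `t` admits a detour beyond every radius.
Hence, among the exit paths coded together with a witness of their divergence to infinity (a
complete metrizable space), those that merge with `t` can be changed arbitrarily far out, and
Baire's theorem yields uncountably many exit paths. As the vertex set is countable, a
tail-equivalence class is countable, so there are uncountably many exits.
-/

open Set Relation Topology

namespace BareExit

section Topology

variable {X : Type*} [TopologicalSpace X]

theorem exists_rel_self_of_isClosed [CompactSpace X] [Nonempty X] {r : X → X → Prop}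
    (htrans : ∀ {x y z}, r x y → r y z → r x z) (hclosed : ∀ x, IsClosed {y | r x y})
    (hserial : ∀ x, ∃ y, r x y) : ∃ x, r x x := by
  have chain_bounded (c : Set X) (hc : IsChain r c) (hne : c.Nonempty) :
      ∃ b, ∀ x ∈ c, r x b := by
    have : Nonempty c := hne.to_subtype
    have hdir : Directed (· ⊇ ·) fun x : c => {y | r x y} := by
      intro x y
      rcases eq_or_ne x y with rfl | hxy
      · exact ⟨x, subset_rfl, subset_rfl⟩
      · rcases hc x.2 y.2 (Subtype.coe_injective.ne hxy) with h | h
        · exact ⟨y, fun z => htrans h, subset_rfl⟩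
        · exact ⟨x, subset_rfl, fun z => htrans h⟩
    obtain ⟨b, hb⟩ := IsCompact.nonempty_iInter_of_directed_nonempty_isCompact_isClosed _ hdir
      (fun x => hserial x) (fun x => (hclosed x).isCompact) (fun x => hclosed x)
    exact ⟨b, fun x hx => mem_iInter.1 hb ⟨x, hx⟩⟩
  obtain ⟨x, hx⟩ := exists_maximal_of_nonempty_chains_bounded chain_bounded htrans
  obtain ⟨y, hxy⟩ := hserial x
  exact ⟨x, htrans hxy (hx y hxy)⟩

theorem not_countable_image_closure [TopologicalSpace.IsCompletelyMetrizableSpace X]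
    {Y : Type*} [TopologicalSpace Y] [T1Space Y] {f : X → Y} (hf : Continuous f) {D : Set X}
    (hne : D.Nonempty) (hD : ∀ x ∈ D, ∃ᶠ y in 𝓝[D] x, f y ≠ f x) :
    ¬ (f '' closure D).Countable := by
  intro hcount
  have : Countable (f '' closure D) := hcount
  have : Nonempty (closure D) := hne.closure.to_subtype
  have : TopologicalSpace.IsCompletelyMetrizableSpace (closure D) :=
    isClosed_closure.isCompletelyMetrizableSpace
  obtain ⟨y, x, hx⟩ := nonempty_interior_of_iUnion_of_closed
    (f := fun y : f '' closure D => {x : closure D | f x = y})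
    (fun y => isClosed_singleton.preimage (hf.comp continuous_subtype_val))
    (iUnion_eq_univ_iff.2 fun x => ⟨⟨f x, mem_image_of_mem f x.2⟩, rfl⟩)
  rw [mem_interior_iff_mem_nhds, nhds_subtype, mem_comap] at hx
  obtain ⟨U, hU, hUf⟩ := hx
  obtain ⟨W, hWU, hW, hxW⟩ := mem_nhds_iff.1 hU
  have eq_of_mem (z : X) (hz : z ∈ W ∩ D) : f z = y :=
    @hUf ⟨z, subset_closure hz.2⟩ (hWU hz.1)
  obtain ⟨z, hz⟩ := mem_closure_iff.1 x.2 W hW hxW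
  obtain ⟨z', hz', hne⟩ := ((hD z hz.2).and_eventually
    (inter_mem (mem_nhdsWithin_of_mem_nhds (hW.mem_nhds hz.1)) self_mem_nhdsWithin)).exists
  exact hz' ((eq_of_mem z' hne).trans (eq_of_mem z hz).symm)

theorem frequently_nhdsWithin_of_forall_exists_eq_lt {α : Type*} [TopologicalSpace α]
    {D : Set (ℕ → α)} {x : ℕ → α} {p : (ℕ → α) → Prop}
    (h : ∀ n, ∃ y ∈ D, p y ∧ ∀ i < n, y i = x i) : ∃ᶠ y in 𝓝[D] x, p y := by
  choose y hyD hp hy using h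
  have htend : Tendsto y atTop (𝓝 x) := tendsto_pi_nhds.2 fun i =>
    tendsto_const_nhds.congr' ((eventually_gt_atTop i).mono fun n hn => (hy n i hn).symm)
  exact (tendsto_nhdsWithin_iff.2 ⟨htend, .of_forall hyD⟩).frequently (.of_forall hp)

end Topology

variable {V : Type*}

section Relation

variable {r : V → V → Prop}

open CategoryTheory Opposite in
/-- König's lemma. -/
theorem exists_seq_of_finite_levels {S : ℕ → Set V} (hfin : ∀ n, (S n).Finite)
    (hne : ∀ n, (S n).Nonempty) (hpred : ∀ n, ∀ v ∈ S (n + 1), ∃ u ∈ S n, r u v) :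
    ∃ t : ℕ → V, ∀ n, t n ∈ S n ∧ r (t n) (t (n + 1)) := by
  choose p hpS hpr using hpred
  let F : ℕᵒᵖ ⥤ Type _ := Functor.ofOpSequence (X := fun n => S n)
    fun n => TypeCat.ofHom fun v => ⟨p n v v.2, hpS n v v.2⟩
  have (n : ℕᵒᵖ) : Finite (F.obj n) := (hfin n.unop).to_subtype
  have (n : ℕᵒᵖ) : Nonempty (F.obj n) := (hne n.unop).to_subtype
  obtain ⟨t, ht⟩ := nonempty_sections_of_finite_cofiltered_system F
  have hstep (n : ℕ) : F.map (homOfLE n.le_succ).op (t (op (n + 1))) = t (op n) := ht _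
  simp only [F, Functor.ofOpSequence_map_homOfLE_succ] at hstep
  refine ⟨fun n => (t (op n)).1, fun n => ⟨(t (op n)).2, ?_⟩⟩
  have hpred_eq : p n (t (op (n + 1))).1 (t (op (n + 1))).2 = (t (op n)).1 :=
    congrArg Subtype.val (hstep n)
  have hr := hpr n _ (t (op (n + 1))).2
  rwa [hpred_eq] at hr

theorem exists_seq_of_reflTransGen {a b : V} (h : ReflTransGen r a b) {f : ℕ → V} (hf0 : f 0 = b)
    (hf : ∀ i, r (f i) (f (i + 1))) :
    ∃ g : ℕ → V, g 0 = a ∧ (∀ i, r (g i) (g (i + 1))) ∧ ∃ l, ∀ i, g (l + i) = f i := by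
  induction h using ReflTransGen.head_induction_on with
  | refl => exact ⟨f, hf0, hf, 0, fun i => by rw [zero_add]⟩
  | @head a c hac _ ih =>
    obtain ⟨g, hg0, hg, l, hgf⟩ := ih
    refine ⟨fun | 0 => a | i + 1 => g i, rfl, ?_, l + 1, fun i => ?_⟩
    · rintro (_ | i)
      · exact (congrArg (r a) hg0).mpr hac
      · exact hg i
    · rw [Nat.add_right_comm]
      exact hgf i

/-- Follows `f` up to time `m`, then `g` from its start. -/
def splice (f : ℕ → V) (m : ℕ) (g : ℕ → V) (i : ℕ) : V :=
  if i ≤ m then f i else g (i - m)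

theorem splice_of_le (f g : ℕ → V) {m i : ℕ} (hi : i ≤ m) : splice f m g i = f i :=
  if_pos hi

theorem splice_add {f g : ℕ → V} {m : ℕ} (hg0 : g 0 = f m) (i : ℕ) :
    splice f m g (m + i) = g i := by
  rcases i.eq_zero_or_pos with rfl | hi
  · rw [add_zero, splice_of_le f g le_rfl, hg0]
  · rw [splice, if_neg (by omega), Nat.add_sub_cancel_left]

theorem splice_rel {f g : ℕ → V} {m : ℕ} (hg0 : g 0 = f m) (hf : ∀ i, r (f i) (f (i + 1)))
    (hg : ∀ i, r (g i) (g (i + 1))) (i : ℕ) : r (splice f m g i) (splice f m g (i + 1)) := by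
  rcases lt_or_ge i m with hi | hi
  · rw [splice_of_le f g hi.le, splice_of_le f g hi]
    exact hf i
  · obtain ⟨j, rfl⟩ := Nat.exists_eq_add_of_le hi
    rw [splice_add hg0, add_assoc, splice_add hg0]
    exact hg j

/-- The vertices at the end of an `r`-walk of length `n` starting in `S`. -/
def stepsFrom (r : V → V → Prop) (S : Set V) : ℕ → Set V
  | 0 => S
  | n + 1 => {w | ∃ u ∈ stepsFrom r S n, r u w}

variable {S : Set V}

theorem exists_mem_stepsFrom {u v : V} (hu : u ∈ S) (huv : ReflTransGen r u v) :
    ∃ n, v ∈ stepsFrom r S n := by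
  induction huv with
  | refl => exact ⟨0, hu⟩
  | tail _ h ih =>
    obtain ⟨n, hn⟩ := ih
    exact ⟨n + 1, _, hn, h⟩

theorem finite_stepsFrom (hS : S.Finite) (hfin : ∀ u, {w | r u w}.Finite) (n : ℕ) :
    (stepsFrom r S n).Finite := by
  induction n with
  | zero => exact hS
  | succ n ih =>
    refine (ih.biUnion fun u _ => hfin u).subset ?_
    rintro w ⟨u, hu, huw⟩
    exact mem_biUnion hu huw

end Relation

/-- `d` behaves like the distance from a finite set of root vertices in the directed graph with
adjacency relation `A`. -/
structure IsLevelFunction (A : V → V → Prop) (d : V → ℕ) : Prop where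
  le_succ : ∀ {u v}, A u v → d v ≤ d u + 1
  exists_pred : ∀ {v n}, d v = n + 1 → ∃ u, A u v ∧ d u = n
  finite_le : ∀ n, {v | d v ≤ n}.Finite

/-- An exit path of the directed graph with adjacency relation `A`. -/
def IsExitPath (A : V → V → Prop) (t : ℕ → V) : Prop :=
  (∀ i, A (t i) (t (i + 1))) ∧ Tendsto t atTop cofinite

/-- The infinite walks which at time `n` are on level `n`. When `d` is the distance from a set of
roots, these are the infinite geodesics starting at a root. -/
def geodesicRays (A : V → V → Prop) (d : V → ℕ) : Set (ℕ → V) :=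
  {t | ∀ n, d (t n) = n ∧ A (t n) (t (n + 1))}

/-- The edges of `A` that start on level at least `n`. -/
def AdjAbove (A : V → V → Prop) (d : V → ℕ) (n : ℕ) (u v : V) : Prop :=
  A u v ∧ n ≤ d u

/-- From `v` one can reach, without using an edge that starts below level `n`, the source `u` of an
edge that enters `t` at a time after `n` and does not come from `t` itself. -/
def HasSideEntry (A : V → V → Prop) (d : V → ℕ) (t : ℕ → V) (n : ℕ) (v : V) : Prop :=
  ∃ i u, n ≤ i ∧ u ≠ t i ∧ A u (t (i + 1)) ∧ ReflTransGen (AdjAbove A d n) v u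

/-- Arbitrarily far out, `t'` leads to side entries of `t`. -/
def Feeds (A : V → V → Prop) (d : V → ℕ) (t' t : ℕ → V) : Prop :=
  ∀ n, HasSideEntry A d t n (t' n)

/-- The exit paths `i ↦ (x i).1`, coded together with a witness `n ↦ (x n).2` that their level tends
to infinity. Unlike the set of exit paths itself, this set is closed in the product topology. -/
def exitCodes (A : V → V → Prop) (d : V → ℕ) : Set (ℕ → V × ℕ) :=
  {x | (∀ i, A (x i).1 (x (i + 1)).1) ∧ ∀ n i, (x n).2 ≤ i → n ≤ d (x i).1}

/-- Up to a shift of time, `f` eventually coincides with `t`. -/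
def MergesWith (t f : ℕ → V) : Prop :=
  ∃ m k, ∀ i, f (m + i) = t (k + i)

theorem exists_isLevelFunction {A : V → V → Prop} {S : Set V} (hS : S.Finite)
    (hroot : ∀ v, ∃ u ∈ S, ReflTransGen A u v) (hfin : ∀ u, {w | A u w}.Finite) :
    ∃ d, IsLevelFunction A d := by
  have hex (v : V) : ∃ n, v ∈ stepsFrom A S n := by
    obtain ⟨u, hu, huv⟩ := hroot v
    exact exists_mem_stepsFrom hu huv
  have le_succ {u v n} (h : A u v) (hu : u ∈ stepsFrom A S n) : Nat.find (hex v) ≤ n + 1 :=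
    Nat.find_min' (hex v) ⟨u, hu, h⟩
  refine ⟨fun v => Nat.find (hex v), fun h => le_succ h (Nat.find_spec (hex _)), ?_, ?_⟩
  · intro v n hv
    obtain ⟨u, hu, huv⟩ : v ∈ stepsFrom A S (n + 1) := hv ▸ Nat.find_spec (hex v)
    have hle := Nat.find_min' (hex u) hu
    have hge := le_succ huv (Nat.find_spec (hex u))
    exact ⟨u, huv, by omega⟩
  · intro n
    exact ((finite_Iic n).biUnion fun i _ => finite_stepsFrom hS hfin i).subset
      fun v hv => mem_biUnion (show _ ∈ Iic n from hv) (Nat.find_spec (hex v))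

variable {A : V → V → Prop} {d : V → ℕ} {t t' t'' : ℕ → V}

theorem tendsto_cofinite_of_tendsto_level (h : Tendsto (d ∘ t) atTop atTop) :
    Tendsto t atTop cofinite :=
  le_cofinite_iff_eventually_ne.2 fun v =>
    (h.eventually_gt_atTop (d v)).mono fun _ hi hv => hi.ne' (congrArg d hv)

theorem isExitPath_of_mem_geodesicRays (ht : t ∈ geodesicRays A d) : IsExitPath A t :=
  ⟨fun i => (ht i).2, tendsto_cofinite_of_tendsto_level <|
    tendsto_id.congr fun i => (ht i).1.symm⟩

theorem IsExitPath.comp_add (ht : IsExitPath A t) (k : ℕ) : IsExitPath A fun i => t (k + i) :=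
  ⟨fun i => ht.1 (k + i), ht.2.comp (tendsto_atTop_mono (Nat.le_add_left · k) tendsto_id)⟩

theorem isExitPath_of_mem_exitCodes {x : ℕ → V × ℕ} (hx : x ∈ exitCodes A d) :
    IsExitPath A fun i => (x i).1 :=
  ⟨hx.1, tendsto_cofinite_of_tendsto_level <| tendsto_atTop.2 fun n =>
    (eventually_ge_atTop (x n).2).mono (hx.2 n)⟩

theorem reflTransGen_adjAbove_mono {m n : ℕ} (hmn : m ≤ n) {u v : V}
    (h : ReflTransGen (AdjAbove A d n) u v) : ReflTransGen (AdjAbove A d m) u v :=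
  ReflTransGen.mono (fun _ _ hab => ⟨hab.1, hmn.trans hab.2⟩) _ _ h

theorem isClosed_exitCodes [TopologicalSpace V] [DiscreteTopology V] :
    IsClosed (exitCodes A d) := by
  simp only [exitCodes, ofPred_and, ofPred_forall]
  refine .inter (isClosed_iInter fun i => ?_) (isClosed_iInter fun n => isClosed_iInter fun i => ?_)
  · exact (isClosed_discrete {p : V × V | A p.1 p.2}).preimage
      (f := fun x : ℕ → V × ℕ => ((x i).1, (x (i + 1)).1)) (by fun_prop)
  · exact (isClosed_discrete {p : V × ℕ | p.2 ≤ i → n ≤ d p.1}).preimage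
      (f := fun x : ℕ → V × ℕ => ((x i).1, (x n).2)) (by fun_prop)

theorem exists_divergence_witness (ht : t ∈ geodesicRays A d) {f : ℕ → V}
    (hf : MergesWith t f) : ∃ N : ℕ → ℕ, ∀ n i, N n ≤ i → n ≤ d (f i) := by
  obtain ⟨m, k, h⟩ := hf
  refine ⟨fun n => m + n, fun n i hi => ?_⟩
  obtain ⟨j, rfl⟩ := Nat.exists_eq_add_of_le hi
  rw [add_assoc, h, (ht _).1]
  omega

namespace IsLevelFunction

theorem exists_reflTransGen_adjAbove (hd : IsLevelFunction A d) {n : ℕ} {v : V} (hv : n ≤ d v) :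
    ∃ u, d u = n ∧ ReflTransGen (AdjAbove A d n) u v := by
  obtain ⟨k, hk⟩ := Nat.exists_eq_add_of_le hv
  induction k generalizing v with
  | zero => exact ⟨v, hk, .refl⟩
  | succ k ih =>
    obtain ⟨w, hwv, hw⟩ : ∃ w, A w v ∧ d w = n + k := hd.exists_pred hk
    obtain ⟨u, hu, huw⟩ := ih (by omega) hw
    exact ⟨u, hu, huw.tail ⟨hwv, by omega⟩⟩

theorem finite_level (hd : IsLevelFunction A d) (n : ℕ) : {v | d v = n}.Finite :=
  (hd.finite_le n).subset fun _ => le_of_eq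

theorem nonempty_level [Infinite V] (hd : IsLevelFunction A d) (n : ℕ) :
    {v | d v = n}.Nonempty := by
  obtain ⟨v, hv⟩ := (hd.finite_le n).exists_notMem
  obtain ⟨u, hu, -⟩ := hd.exists_reflTransGen_adjAbove (not_le.1 hv).le
  exact ⟨u, hu⟩

theorem nonempty_geodesicRays [Infinite V] (hd : IsLevelFunction A d) :
    (geodesicRays A d).Nonempty := by
  refine exists_seq_of_finite_levels hd.finite_level hd.nonempty_level fun n v hv => ?_
  obtain ⟨u, huv, hu⟩ := hd.exists_pred hv
  exact ⟨u, hu, huv⟩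

theorem isCompact_geodesicRays [TopologicalSpace V] [DiscreteTopology V]
    (hd : IsLevelFunction A d) : IsCompact (geodesicRays A d) := by
  have hclosed : IsClosed {t : ℕ → V | ∀ n, A (t n) (t (n + 1))} := by
    simp only [ofPred_forall]
    exact isClosed_iInter fun n =>
      (isClosed_discrete {p : V × V | A p.1 p.2}).preimage
        (f := fun t : ℕ → V => (t n, t (n + 1))) (by fun_prop)
  convert (isCompact_univ_pi fun n => (hd.finite_level n).isCompact).inter_right hclosed using 1
  ext t
  simp only [geodesicRays, mem_inter_iff, mem_univ_pi, mem_ofPred_eq, forall_and]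

theorem le_level_of_adj_geodesicRay (hd : IsLevelFunction A d) (ht : t ∈ geodesicRays A d)
    {u : V} {i : ℕ} (hu : A u (t (i + 1))) : i ≤ d u := by
  have := hd.le_succ hu
  rw [(ht (i + 1)).1] at this
  omega

theorem exists_feeds (hd : IsLevelFunction A d) (ht : t ∈ geodesicRays A d)
    (hside : ∀ n, ∃ i u, n ≤ i ∧ u ≠ t i ∧ A u (t (i + 1))) :
    ∃ t' ∈ geodesicRays A d, Feeds A d t' t := by
  suffices h : ∃ t' : ℕ → V, ∀ n, t' n ∈ {v | d v = n ∧ HasSideEntry A d t n v} ∧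
      A (t' n) (t' (n + 1)) by
    obtain ⟨t', h⟩ := h
    exact ⟨t', fun n => ⟨(h n).1.1, (h n).2⟩, fun n => (h n).1.2⟩
  refine exists_seq_of_finite_levels (fun n => (hd.finite_level n).subset fun v hv => hv.1) ?_ ?_
  · intro n
    obtain ⟨i, u, hi, hne, hu⟩ := hside n
    obtain ⟨v, hv, hvu⟩ :=
      hd.exists_reflTransGen_adjAbove (hi.trans (hd.le_level_of_adj_geodesicRay ht hu))
    exact ⟨v, hv, i, u, hi, hne, hu, hvu⟩
  · rintro n v ⟨hv, i, u, hi, hne, hu, hvu⟩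
    obtain ⟨w, hwv, hw⟩ := hd.exists_pred hv
    have hwu : ReflTransGen (AdjAbove A d n) w u :=
      (reflTransGen_adjAbove_mono n.le_succ hvu).head ⟨hwv, hw.ge⟩
    exact ⟨w, ⟨hw, i, u, by omega, hne, hu, hwu⟩, hwv⟩

theorem feeds_trans (hd : IsLevelFunction A d) (ht' : t' ∈ geodesicRays A d)
    (h : Feeds A d t'' t') (h' : Feeds A d t' t) : Feeds A d t'' t := by
  intro n
  obtain ⟨i, u, hi, -, hu, hreach⟩ := h n
  obtain ⟨j, w, hj, hne, hw, hreach'⟩ := h' (i + 1)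
  have hstep : AdjAbove A d n u (t' (i + 1)) :=
    ⟨hu, hi.trans (hd.le_level_of_adj_geodesicRay ht' hu)⟩
  exact ⟨j, w, by omega, hne, hw,
    (hreach.tail hstep).trans (reflTransGen_adjAbove_mono (by omega) hreach')⟩

theorem exists_feeds_self [Infinite V] (hd : IsLevelFunction A d)
    (hside : ∀ t ∈ geodesicRays A d, ∀ n, ∃ i u, n ≤ i ∧ u ≠ t i ∧ A u (t (i + 1))) :
    ∃ t ∈ geodesicRays A d, Feeds A d t t := by
  let _ : TopologicalSpace V := ⊥
  have : DiscreteTopology V := ⟨rfl⟩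
  have : CompactSpace (geodesicRays A d) := isCompact_iff_compactSpace.1 hd.isCompact_geodesicRays
  have : Nonempty (geodesicRays A d) := hd.nonempty_geodesicRays.to_subtype
  have hclosed (t : geodesicRays A d) : IsClosed {t' : geodesicRays A d | Feeds A d t' t} := by
    simp only [Feeds, ofPred_forall]
    exact isClosed_iInter fun n => (isClosed_discrete {v | HasSideEntry A d t n v}).preimage
      (f := fun t' : geodesicRays A d => t'.1 n)
      ((continuous_apply n).comp continuous_subtype_val)
  obtain ⟨t, ht⟩ := exists_rel_self_of_isClosed (r := fun t t' : geodesicRays A d => Feeds A d t' t)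
    (fun {_ t' _} h h' => hd.feeds_trans t'.2 h' h) hclosed
    (fun t => by
      obtain ⟨t', ht', h⟩ := hd.exists_feeds t.2 (hside t t.2)
      exact ⟨⟨t', ht'⟩, h⟩)
  exact ⟨t, t.2, ht⟩

theorem exists_detour (hd : IsLevelFunction A d) (ht : t ∈ geodesicRays A d)
    (hself : Feeds A d t t) (k : ℕ) :
    ∃ g : ℕ → V, g 0 = t k ∧ (∀ i, AdjAbove A d k (g i) (g (i + 1))) ∧ MergesWith t g ∧
      ∃ i, g i ≠ t (k + i) := by
  obtain ⟨i, u, hi, hne, hu, hreach⟩ := hself k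
  obtain ⟨g, hg0, hg, l, hgl⟩ := exists_seq_of_reflTransGen hreach
    (f := fun | 0 => u | n + 1 => t (i + 1 + n)) rfl <| by
      rintro (_ | n)
      · exact ⟨hu, hi.trans (hd.le_level_of_adj_geodesicRay ht hu)⟩
      · exact ⟨(ht _).2, by rw [(ht _).1]; omega⟩
  refine ⟨g, hg0, hg, ⟨l + 1, i + 1, fun n => ?_⟩, ?_⟩
  · rw [add_assoc, add_comm 1 n]
    exact hgl (n + 1)
  · by_contra! heq
    have hsync : k + l = i := by
      have hmeet : t (k + (l + 1)) = t (i + 1) := (heq _).symm.trans (hgl 1)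
      have := congrArg d hmeet
      rw [(ht _).1, (ht _).1] at this
      omega
    exact hne (by rw [← hsync, ← heq]; exact (hgl 0).symm)

theorem exists_far_modification (hd : IsLevelFunction A d) (ht : t ∈ geodesicRays A d)
    (hself : Feeds A d t t) {f : ℕ → V}
    (hf : ∀ i, A (f i) (f (i + 1))) (hmerge : MergesWith t f) (n : ℕ) :
    ∃ f' : ℕ → V, f' ≠ f ∧ (∀ i, A (f' i) (f' (i + 1))) ∧ MergesWith t f' ∧
      ∃ m, n ≤ m ∧ (∀ i ≤ m, f' i = f i) ∧ ∀ i ≥ m, n ≤ d (f' i) := by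
  obtain ⟨m, k, hmk⟩ := hmerge
  obtain ⟨g, hg0, hg, ⟨a, b, hab⟩, i, hi⟩ := hd.exists_detour ht hself (k + n)
  have hgf : g 0 = f (m + n) := by rw [hg0, hmk]
  refine ⟨splice f (m + n) g, fun heq => hi ?_, splice_rel hgf hf fun i => (hg i).1,
    ⟨m + n + a, b, fun i => ?_⟩, m + n, by omega, fun i => splice_of_le f g, fun i hi => ?_⟩
  · rw [← splice_add hgf, heq, add_assoc, hmk, add_assoc]
  · rw [add_assoc, splice_add hgf, hab]
  · obtain ⟨j, rfl⟩ := Nat.exists_eq_add_of_le hi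
    rw [splice_add hgf]
    exact (Nat.le_add_left n k).trans (hg j).2

theorem not_countable_isExitPath (hd : IsLevelFunction A d) (ht : t ∈ geodesicRays A d)
    (hself : Feeds A d t t) : ¬ {f | IsExitPath A f}.Countable := by
  let _ : TopologicalSpace V := ⊥
  have : DiscreteTopology V := ⟨rfl⟩
  let walk (x : ℕ → V × ℕ) (i : ℕ) : V := (x i).1
  let D : Set (ℕ → V × ℕ) := {x ∈ exitCodes A d | MergesWith t (walk x)}
  have hne : D.Nonempty :=
    ⟨fun i => (t i, i), ⟨fun i => (ht i).2, fun n i hi => hi.trans (ht i).1.ge⟩, 0, 0, fun _ => rfl⟩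
  have hmodify : ∀ x ∈ D, ∃ᶠ y in 𝓝[D] x, walk y ≠ walk x := by
    rintro x ⟨⟨hwalk, hlevel⟩, hmerge⟩
    refine frequently_nhdsWithin_of_forall_exists_eq_lt fun n => ?_
    obtain ⟨f, hne, hf, hfm, m, hnm, hfx, hfn⟩ := hd.exists_far_modification ht hself hwalk hmerge n
    obtain ⟨N, hN⟩ := exists_divergence_witness ht hfm
    refine ⟨fun i => (f i, if i < n then (x i).2 else N i), ⟨⟨hf, fun j i hi => ?_⟩, hfm⟩, hne,
      fun i hi => Prod.ext (hfx i (by omega)) (if_pos hi)⟩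
    dsimp only at hi ⊢
    split_ifs at hi with hj
    · rcases le_total i m with him | him
      · exact (hlevel j i hi).trans_eq (congrArg d (hfx i him).symm)
      · exact hj.le.trans (hfn i him)
    · exact hN j i hi
  have huncountable := not_countable_image_closure (f := walk) (by fun_prop) hne hmodify
  refine fun hcount => huncountable (hcount.mono ?_)
  rintro _ ⟨x, hx, rfl⟩
  exact isExitPath_of_mem_exitCodes (closure_minimal (fun x hx => hx.1) isClosed_exitCodes hx)

theorem exists_bare_isExitPath [Infinite V] (hd : IsLevelFunction A d)
    (hcount : {t | IsExitPath A t}.Countable) :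
    ∃ t, IsExitPath A t ∧ ∀ i u, A u (t (i + 1)) → u = t i := by
  by_contra! hnotbare
  obtain ⟨t, ht, hself⟩ := hd.exists_feeds_self fun t ht n => by
    obtain ⟨i, u, hu, hne⟩ := hnotbare _ ((isExitPath_of_mem_geodesicRays ht).comp_add n)
    exact ⟨n + i, u, by omega, hne, hu⟩
  exact hd.not_countable_isExitPath ht hself hcount

end IsLevelFunction

end BareExit

namespace DirGraph

variable (G : DirGraph)

/-- Some edge of `G` goes from `u` to `w`. -/
def Adj (u w : G.V) : Prop :=
  ∃ e : G.E, G.s e = u ∧ G.r e = w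

variable {G}

theorem isExitPath_iff {t : ℕ → G.V} : G.IsExitPath t ↔ BareExit.IsExitPath G.Adj t := by
  refine and_congr_right fun _ => ⟨fun h => ?_, fun h M hM => ?_⟩
  · refine le_cofinite_iff_eventually_ne.2 fun v => ?_
    obtain ⟨N, hN⟩ := h {v} (finite_singleton v)
    exact eventually_atTop.2 ⟨N, hN⟩
  · exact eventually_atTop.1 (h.eventually hM.eventually_cofinite_notMem)

theorem IsPathFrom.reflTransGen_adj {μ : List G.E} {u w : G.V} (h : G.IsPathFrom μ u w) :
    ReflTransGen G.Adj u w := by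
  induction μ generalizing u with
  | nil => exact h.2.2.2 rfl ▸ .refl
  | cons e μ ih =>
    obtain ⟨hpath, hsource, hrange, -⟩ := h
    obtain ⟨hnext, hpath⟩ := List.isChain_cons.1 hpath
    refine .head ⟨e, hsource e rfl, rfl⟩ (ih ⟨hpath, fun f hf => (hnext f hf).symm, ?_, ?_⟩)
    · intro f hf
      exact hrange f (by rw [List.getLast?_cons, Option.mem_def.1 hf]; rfl)
    · rintro rfl
      exact hrange e rfl

theorem countable_tailEquiv (t : ℕ → G.V) : {t' | G.TailEquiv t t'}.Countable := by
  simp only [TailEquiv, ofPred_exists]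
  refine countable_iUnion fun k => countable_iUnion fun N => ?_
  refine MapsTo.countable_of_injOn (f := fun t' (i : Fin N) => t' i) (mapsTo_univ _ _) ?_
    countable_univ
  intro t₁ h₁ t₂ h₂ heq
  funext i
  rcases lt_or_ge i N with hi | hi
  · exact congrFun heq ⟨i, hi⟩
  · exact (h₁ i hi).2.symm.trans (h₂ i hi).2

theorem countable_isExitPath {T : Set (ℕ → G.V)} (hT : T.Countable)
    (hTail : ∀ t, G.IsExitPath t → ∃ t' ∈ T, G.TailEquiv t' t) :
    {t | G.IsExitPath t}.Countable :=
  (hT.biUnion fun t' _ => countable_tailEquiv t').mono fun t ht => by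
    obtain ⟨t', ht', h⟩ := hTail t ht
    exact mem_biUnion ht' h

end DirGraph

theorem stmt_19_general (G : DirGraph) (S : Set G.V) (hS : S.Finite)
    (hroot : ∀ v, ∃ u ∈ S, ∃ μ, G.IsPathFrom μ u v)
    (hfin : ∀ v, (G.r '' {e | G.s e = v}).Finite) (hInf : Infinite G.V)
    (hcount : ∃ T : Set (ℕ → G.V), T.Countable ∧
      ∀ t : ℕ → G.V, G.IsExitPath t → ∃ t' ∈ T, G.TailEquiv t' t) :
    ∃ t : ℕ → G.V, G.IsExitPath t ∧
      ∀ i : ℕ, ∃! u : G.V, ∃ e : G.E, G.r e = t (i + 1) ∧ G.s e = u := by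
  obtain ⟨T, hT, hTail⟩ := hcount
  have hexits := DirGraph.countable_isExitPath hT hTail
  simp only [DirGraph.isExitPath_iff] at hexits ⊢
  obtain ⟨d, hd⟩ := BareExit.exists_isLevelFunction (A := G.Adj) hS
    (fun v => (hroot v).imp fun u ⟨hu, μ, hμ⟩ => ⟨hu, hμ.reflTransGen_adj⟩) hfin
  obtain ⟨t, ht, hbare⟩ := hd.exists_bare_isExitPath hexits
  refine ⟨t, ht, fun i => ⟨t i, ?_, ?_⟩⟩
  · obtain ⟨e, hs, hr⟩ := ht.1 i
    exact ⟨e, hr, hs⟩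
  · rintro u ⟨e, hr, hs⟩
    exact hbare i u ⟨e, hs, hr⟩

/-- a strongly connected row-finite graph with infinitely many
vertices and at most countably many exits contains a bare exit path. -/
theorem stmt_19 (G : DirGraph) (hSC : G.StronglyConnected) (hRF : G.RowFinite)
    (hInf : Infinite G.V)
    (hcount : ∃ T : Set (ℕ → G.V), T.Countable ∧
      ∀ t : ℕ → G.V, G.IsExitPath t → ∃ t' ∈ T, G.TailEquiv t' t) :
    ∃ t : ℕ → G.V, G.IsExitPath t ∧
      ∀ i : ℕ, ∃! u : G.V, ∃ e : G.E, G.r e = t (i + 1) ∧ G.s e = u := by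
  obtain ⟨v₀⟩ := hInf.nonempty
  exact stmt_19_general G {v₀} (finite_singleton v₀) (fun v => ⟨v₀, rfl, hSC v₀ v⟩)
    (fun v => (hRF v).image G.r) hInf hcount
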